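/- Let D be a positive natural number, p : ℝ → ℝ^D → ℝ a smooth everywhere-positive function, F : ℝ → ℝ^D → ℝ^D a smooth time-dependent vector field, g : ℝ → ℝ, and β : ℝ → ℝ. If p satisfies the Fokker–Planck equation ∂_t p(t,x) = -div_x(F(t,x)·p(t,x)) + (1/2)·g(t)²·Δ_x p(t,x) for all t ∈ ℝ and x ∈ ℝ^D, then for all t and x: ∂_t log p(t,x) + ⟨∇_x log p(t,x), F(t,x) - (1/2 - β(t))·g(t)²·∇_x log p(t,x)⟩ + β(t)·g(t)²·Δ_x log p(t,x) = -div_x F(t,x) + (1/2 + β(t))·g(t)²·Δ_x log p(t,x) + β(t)·g(t)²·‖∇_x log p(t,x)‖². -/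

import Mathlib

open scoped BigOperators RealInnerProductSpace
open MeasureTheory

/-- Divergence of a vector field on `EuclideanSpace ℝ (Fin D)`. -/
noncomputable def divg {D : ℕ} (F : EuclideanSpace ℝ (Fin D) → EuclideanSpace ℝ (Fin D))
    (x : EuclideanSpace ℝ (Fin D)) : ℝ :=
  ∑ i, fderiv ℝ F x (EuclideanSpace.single i 1) i

/-- Laplacian of a scalar field on `EuclideanSpace ℝ (Fin D)`. -/
noncomputable def lap {D : ℕ} (f : EuclideanSpace ℝ (Fin D) → ℝ)
    (x : EuclideanSpace ℝ (Fin D)) : ℝ :=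
  divg (gradient f) x

theorem divg_smul_aux {D : ℕ} (u : EuclideanSpace ℝ (Fin D) → ℝ)
    (V : EuclideanSpace ℝ (Fin D) → EuclideanSpace ℝ (Fin D)) (x : EuclideanSpace ℝ (Fin D))
    (hu : DifferentiableAt ℝ u x) (hV : DifferentiableAt ℝ V x) :
    divg (fun y => u y • V y) x = u x * divg V x + ⟪gradient u x, V x⟫ := by
  unfold divg
  have h : fderiv ℝ (fun y => u y • V y) x = u x • fderiv ℝ V x + (fderiv ℝ u x).smulRight (V x) :=
    (hu.hasFDerivAt.smul hV.hasFDerivAt).fderiv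
  have hg : ∀ i, fderiv ℝ u x (EuclideanSpace.single i 1) = gradient u x i := by
    intro i
    have h2 : fderiv ℝ u x = InnerProductSpace.toDual ℝ _ (gradient u x) := by
      simp [gradient]
    rw [h2, InnerProductSpace.toDual_apply_apply, EuclideanSpace.inner_single_right]
    simp
  rw [h, PiLp.inner_apply, Finset.mul_sum, ← Finset.sum_add_distrib]
  refine Finset.sum_congr rfl fun i _ => ?_
  simp [hg, mul_comm]

theorem gradient_log_aux {D : ℕ} (u : EuclideanSpace ℝ (Fin D) → ℝ)
    (x : EuclideanSpace ℝ (Fin D)) (hu : DifferentiableAt ℝ u x) (h0 : 0 < u x) :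
    gradient u x = u x • gradient (fun y => Real.log (u y)) x := by
  unfold gradient
  rw [(hu.hasFDerivAt.log h0.ne').fderiv, map_smul, smul_smul, mul_inv_cancel₀ h0.ne', one_smul]

/-- Itô drift of `log p` along the general β-forward SDE of Karras et al.
(analytic core of the Appendix G forward proposition). -/
theorem ito_drift_general_forward {D : ℕ} (hD : 0 < D)
    (p : ℝ → EuclideanSpace ℝ (Fin D) → ℝ)
    (F : ℝ → EuclideanSpace ℝ (Fin D) → EuclideanSpace ℝ (Fin D))
    (g β : ℝ → ℝ)
    (hp : ContDiff ℝ (⊤ : ℕ∞) (fun q : ℝ × EuclideanSpace ℝ (Fin D) => p q.1 q.2))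
    (hppos : ∀ t x, 0 < p t x)
    (hF : ContDiff ℝ (⊤ : ℕ∞) (fun q : ℝ × EuclideanSpace ℝ (Fin D) => F q.1 q.2))
    (hFP : ∀ t x, deriv (fun τ => p τ x) t
      = - divg (fun y => p t y • F t y) x + (1 / 2) * g t ^ 2 * lap (p t) x) :
    ∀ t x, deriv (fun τ => Real.log (p τ x)) t
        + ⟪gradient (fun y => Real.log (p t y)) x,
            F t x - ((1 / 2 - β t) * g t ^ 2) • gradient (fun y => Real.log (p t y)) x⟫
        + β t * g t ^ 2 * lap (fun y => Real.log (p t y)) x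
      = - divg (F t) x
        + (1 / 2 + β t) * g t ^ 2 * lap (fun y => Real.log (p t y)) x
        + β t * g t ^ 2 * ‖gradient (fun y => Real.log (p t y)) x‖ ^ 2 := by
  intro t x
  have hpt : ContDiff ℝ (⊤ : ℕ∞) (p t) := hp.comp (contDiff_const.prodMk contDiff_id)
  have hpx : ContDiff ℝ (⊤ : ℕ∞) (fun τ => p τ x) := hp.comp (contDiff_id.prodMk contDiff_const)
  have hFt : ContDiff ℝ (⊤ : ℕ∞) (F t) := hF.comp (contDiff_const.prodMk contDiff_id)
  have hpd : Differentiable ℝ (p t) := hpt.differentiable (by simp)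
  have hFd : Differentiable ℝ (F t) := hFt.differentiable (by simp)
  have hlog : ContDiff ℝ (⊤ : ℕ∞) (fun y => Real.log (p t y)) :=
    hpt.log fun y => (hppos t y).ne'
  have hGd : Differentiable ℝ (gradient (fun y => Real.log (p t y))) := by
    have h1 : Differentiable ℝ (fderiv ℝ (fun y => Real.log (p t y))) :=
      (hlog.fderiv_right (m := (⊤ : ℕ∞)) (by first | exact le_rfl | simp)).differentiable (by simp)
    exact (InnerProductSpace.toDual ℝ
      (EuclideanSpace ℝ (Fin D))).symm.toContinuousLinearEquiv.differentiable.comp h1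
  have hgr : gradient (p t) = fun y => p t y • gradient (fun y => Real.log (p t y)) y :=
    funext fun y => gradient_log_aux (p t) y (hpd y) (hppos t y)
  have hlap : lap (p t) x = p t x * lap (fun y => Real.log (p t y)) x
      + p t x * ‖gradient (fun y => Real.log (p t y)) x‖ ^ 2 := by
    have h1 := divg_smul_aux (p t) (gradient (fun y => Real.log (p t y))) x (hpd x) (hGd x)
    rw [← hgr] at h1
    unfold lap
    rw [h1, congrFun hgr x, real_inner_smul_left, real_inner_self_eq_norm_sq]
  have hdt : deriv (fun τ => Real.log (p τ x)) t = deriv (fun τ => p τ x) t / p t x :=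
    ((hpx.differentiable (by simp) t).hasDerivAt.log (hppos t x).ne').deriv
  have hne := (hppos t x).ne'
  rw [hdt, hFP, hlap, divg_smul_aux _ _ _ (hpd x) (hFd x), congrFun hgr x,
    real_inner_smul_left, inner_sub_right, real_inner_smul_right, real_inner_self_eq_norm_sq]
  field_simp
  ring
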